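/- A system with an n-useful, or an (n−1)-useful, generalized failure detector can be converted to a system with a perfect standard failure detector; conversely, a system with a perfect standard failure detector can be converted to a system with an n-useful (and hence (n−1)-useful) generalized failure detector. Moreover, if suspect_p(S,k) is an (n−1)-useful or n-useful failure-detector event, then |S| = k. -/

import Mathlib

/-! # Model: asynchronous message-passing systems with crash failures and
failure detectors (Halpern–Ricciardi). -/

/-- Events at a process: `send q msg`, `recv q msg` (peer `q`), `crash`,
`doAct α`, `initAct α`, and failure-detector events `suspect x` with report `x : FD`. -/
inductive Event (n : ℕ) (Msg Act FD : Type) where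
  | send    : Fin n → Msg → Event n Msg Act FD
  | recv    : Fin n → Msg → Event n Msg Act FD
  | crash   : Event n Msg Act FD
  | doAct   : Act → Event n Msg Act FD
  | initAct : Act → Event n Msg Act FD
  | suspect : FD → Event n Msg Act FD
  deriving DecidableEq

/-- A history is a finite sequence of events (oldest first). -/
abbrev History (n : ℕ) (Msg Act FD : Type) := List (Event n Msg Act FD)

/-- A run assigns to each time a cut, i.e. a history for each process. -/
abbrev Run (n : ℕ) (Msg Act FD : Type) := ℕ → Fin n → History n Msg Act FD

/-- Runs with standard failure-detector reports (sets of suspected processes). -/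
abbrev StdRun (n : ℕ) (Msg Act : Type) := Run n Msg Act (Finset (Fin n))

/-- Runs with generalized failure-detector reports `(S, k)`. -/
abbrev GenRun (n : ℕ) (Msg Act : Type) := Run n Msg Act (Finset (Fin n) × ℕ)

section Model

variable {n : ℕ} {Msg Act FD FD' : Type}
variable [DecidableEq Msg] [DecidableEq Act] [DecidableEq FD] [DecidableEq FD']

/-- Conditions R1–R5 on runs (R5 is fairness of communication). -/
def IsRun (r : Run n Msg Act FD) : Prop :=
  (∀ p, r 0 p = []) ∧
  (∀ p m, r (m+1) p = r m p ∨ ∃ e, r (m+1) p = r m p ++ [e]) ∧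
  (∀ p q msg m, Event.recv p msg ∈ r m q → Event.send q msg ∈ r m p) ∧
  (∀ p m, Event.crash ∈ r m p → ∃ h, r m p = h ++ [Event.crash]) ∧
  (∀ p q msg,
      (∀ N, ∃ m, N ≤ (r m p).count (Event.send q msg)) →
      (∃ m, Event.crash ∈ r m q) ∨
        (∀ N, ∃ m, N ≤ (r m q).count (Event.recv p msg)))

/-- Process `q` is faulty in run `r` iff `crash` is in `q`'s history. -/
def Faulty (r : Run n Msg Act FD) (q : Fin n) : Prop := ∃ m, Event.crash ∈ r m q

open Classical in
/-- `F(r)`: the set of faulty processes of run `r`. -/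
noncomputable def faultySet (r : Run n Msg Act FD) : Finset (Fin n) :=
  Finset.univ.filter (fun q => Faulty r q)

/-- Communication is reliable in `r`: every message sent by `p` to a process `q`
that never crashes is eventually received by `q` (count-wise). -/
def ReliableComm (r : Run n Msg Act FD) : Prop :=
  ∀ p q msg, ¬ Faulty r q →
    ∀ m, ∃ m', (r m p).count (Event.send q msg) ≤ (r m' q).count (Event.recv p msg)

/-- No failure-detector events occur in `r`. -/
def NoFDEvents (r : Run n Msg Act FD) : Prop :=
  ∀ p m x, Event.suspect x ∉ r m p

/-! ## Standard failure detectors -/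

/-- `Suspects_p(r,m)`: the report of the most recent failure-detector event in
`r_p(m)`, and `∅` if there is none. -/
def Suspects (r : StdRun n Msg Act) (p : Fin n) (m : ℕ) : Finset (Fin n) :=
  (r m p).foldl (fun acc e => match e with | Event.suspect S => S | _ => acc) ∅

/-- Strong accuracy: no process is suspected before it crashes. -/
def StrongAccuracyRun (r : StdRun n Msg Act) : Prop :=
  ∀ p q m, q ∈ Suspects r p m → Event.crash ∈ r m q

/-- Weak accuracy: if some process is correct, some correct process is never suspected. -/
def WeakAccuracyRun (r : StdRun n Msg Act) : Prop :=
  faultySet r ≠ Finset.univ →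
    ∃ q, ¬ Faulty r q ∧ ∀ p m, q ∉ Suspects r p m

/-- Strong completeness: every faulty process is eventually permanently suspected
by every correct process. -/
def StrongCompletenessRun (r : StdRun n Msg Act) : Prop :=
  ∀ p q, Faulty r q → ¬ Faulty r p → ∃ m, ∀ m' ≥ m, q ∈ Suspects r p m'

/-- Weak completeness. -/
def WeakCompletenessRun (r : StdRun n Msg Act) : Prop :=
  ∀ q, Faulty r q → faultySet r ≠ Finset.univ →
    ∃ p, ¬ Faulty r p ∧ ∃ m, ∀ m' ≥ m, q ∈ Suspects r p m'

/-- Impermanent strong completeness. -/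
def ImpStrongCompletenessRun (r : StdRun n Msg Act) : Prop :=
  ∀ p q, Faulty r q → ¬ Faulty r p → ∃ m, q ∈ Suspects r p m

/-- Impermanent weak completeness. -/
def ImpWeakCompletenessRun (r : StdRun n Msg Act) : Prop :=
  ∀ q, Faulty r q → faultySet r ≠ Finset.univ →
    ∃ p m, ¬ Faulty r p ∧ q ∈ Suspects r p m

/-! ## Generalized failure detectors -/

/-- `suspect_p(S,k)` is a `t`-useful failure-detector event for run `r`:
`F(r) ⊆ S`, `n - |S| > min(t,n-1) - k` (stated additively to avoid truncated
subtraction), and `k ≤ |S|`. -/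
def TUsefulEvent (t : ℕ) (r : GenRun n Msg Act) (S : Finset (Fin n)) (k : ℕ) : Prop :=
  faultySet r ⊆ S ∧ n + k > S.card + min t (n - 1) ∧ k ≤ S.card

/-- Generalized strong accuracy. -/
def GenAccuracyRun (r : GenRun n Msg Act) : Prop :=
  ∀ p m (S : Finset (Fin n)) k, Event.suspect (S, k) ∈ r m p →
    ∃ S' ⊆ S, S'.card = k ∧ ∀ q ∈ S', Event.crash ∈ r m q

/-- Generalized impermanent strong completeness (w.r.t. bound `t`). -/
def GenCompletenessRun (t : ℕ) (r : GenRun n Msg Act) : Prop :=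
  ∀ p, ¬ Faulty r p →
    ∃ m, ∃ S : Finset (Fin n), ∃ k, Event.suspect (S, k) ∈ r m p ∧ TUsefulEvent t r S k

/-! ## Protocols, contexts, and generated systems -/

/-- A joint protocol: for each process, a function from finite histories to actions
(identified with the corresponding events). -/
abbrev JointProtocol (n : ℕ) (Msg Act FD : Type) :=
  Fin n → History n Msg Act FD → Event n Msg Act FD

/-- Protocol events: sends and internal (`do`/`init`) events; receives, crashes
and failure-detector events are due to the environment. -/
def IsProtocolEvent : Event n Msg Act FD → Prop
  | Event.send _ _  => True
  | Event.doAct _   => True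
  | Event.initAct _ => True
  | _ => False

/-- A run is consistent with a joint protocol. -/
def Consistent (P : JointProtocol n Msg Act FD) (r : Run n Msg Act FD) : Prop :=
  ∀ p m e, r (m+1) p = r m p ++ [e] → IsProtocolEvent e → e = P p (r m p)

/-- `init_p(α)` may appear only in `p = owner α`'s history and at most once per run. -/
def InitOK (ow : Act → Fin n) (r : Run n Msg Act FD) : Prop :=
  ∀ p m α, Event.initAct α ∈ r m p →
    ow α = p ∧ (r m p).count (Event.initAct α) ≤ 1

/-- The system generated by joint protocol `P` in context `C` (a context is
identified with the set of runs satisfying its constraints): all runs satisfying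
R1–R5, the `init` constraints, and the constraints of the context, that are
consistent with the protocol. -/
def Generated (ow : Act → Fin n) (C : Set (Run n Msg Act FD))
    (P : JointProtocol n Msg Act FD) : Set (Run n Msg Act FD) :=
  {r | IsRun r ∧ InitOK ow r ∧ r ∈ C ∧ Consistent P r}

/-! ## UDC and nUDC -/

/-- UDC of action `α` owned by `p` in system `R` (conditions DC1–DC3). -/
def UDCof (R : Set (Run n Msg Act FD)) (p : Fin n) (α : Act) : Prop :=
  (∀ r ∈ R, ∀ m, Event.initAct α ∈ r m p →
      ∃ m' ≥ m, Event.doAct α ∈ r m' p ∨ Event.crash ∈ r m' p) ∧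
  (∀ r ∈ R, ∀ q₁ q₂ m, Event.doAct α ∈ r m q₁ →
      ∃ m' ≥ m, Event.doAct α ∈ r m' q₂ ∨ Event.crash ∈ r m' q₂) ∧
  (∀ r ∈ R, ∀ q m, Event.doAct α ∈ r m q → Event.initAct α ∈ r m p)

/-- nUDC of action `α` owned by `p` (conditions DC1, DC2', DC3). -/
def NUDCof (R : Set (Run n Msg Act FD)) (p : Fin n) (α : Act) : Prop :=
  (∀ r ∈ R, ∀ m, Event.initAct α ∈ r m p →
      ∃ m' ≥ m, Event.doAct α ∈ r m' p ∨ Event.crash ∈ r m' p) ∧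
  (∀ r ∈ R, ∀ q₁ q₂ m, Event.doAct α ∈ r m q₁ →
      ∃ m' ≥ m, Event.doAct α ∈ r m' q₂ ∨ Event.crash ∈ r m' q₂ ∨
        Event.crash ∈ r m' q₁) ∧
  (∀ r ∈ R, ∀ q m, Event.doAct α ∈ r m q → Event.initAct α ∈ r m p)

/-- `R` attains UDC: UDC of every coordination action. -/
def AttainsUDC (ow : Act → Fin n) (R : Set (Run n Msg Act FD)) : Prop :=
  ∀ α, UDCof R (ow α) α

/-- `R` attains nUDC: nUDC of every coordination action. -/
def AttainsNUDC (ow : Act → Fin n) (R : Set (Run n Msg Act FD)) : Prop :=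
  ∀ α, NUDCof R (ow α) α

/-! ## Conversions between systems -/

/-- Re-tag a non-failure-detector event; failure-detector events are dropped. -/
def mapNonFD : Event n Msg Act FD → Option (Event n Msg Act FD')
  | Event.send q msg => some (Event.send q msg)
  | Event.recv q msg => some (Event.recv q msg)
  | Event.crash => some Event.crash
  | Event.doAct a => some (Event.doAct a)
  | Event.initAct a => some (Event.initAct a)
  | Event.suspect _ => none

/-- `f` converts system `R` to system `R'`: `R' = f '' R`, each `f r` is a run,
and all events of `r` except possibly failure-detector events appear in `f r`
in the same order as in `r` (with possibly additional events). -/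
def IsConversion (f : Run n Msg Act FD → Run n Msg Act FD')
    (R : Set (Run n Msg Act FD)) (R' : Set (Run n Msg Act FD')) : Prop :=
  R' = f '' R ∧
  ∀ r ∈ R, IsRun (f r) ∧
    ∀ p m, ∃ m',
      ((r m p).filterMap (mapNonFD (FD' := Unit))).Sublist
        ((f r m' p).filterMap (mapNonFD (FD' := Unit)))


/-- Accumulating-union transformation of a single history: each failure-detector
event is replaced by one reporting the union of all processes suspected so far. -/
def unionHist : Finset (Fin n) → History n Msg Act (Finset (Fin n)) →
    History n Msg Act (Finset (Fin n))
  | _, [] => []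
  | acc, Event.suspect S :: rest => Event.suspect (acc ∪ S) :: unionHist (acc ∪ S) rest
  | acc, e :: rest => e :: unionHist acc rest

/-- The conversion that always outputs the union of all previously suspected
processes. -/
def unionConvert (r : StdRun n Msg Act) : StdRun n Msg Act :=
  fun m p => unionHist ∅ (r m p)

/-! ## Knowledge and temporal semantics (shallow embedding) -/

/-- `(R,r,m) ⊨ K_p φ`. -/
def Knows (R : Set (Run n Msg Act FD)) (p : Fin n)
    (φ : Run n Msg Act FD → ℕ → Prop) (r : Run n Msg Act FD) (m : ℕ) : Prop :=
  ∀ r' ∈ R, ∀ m', r' m' p = r m p → φ r' m'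

/-- `(R,r,m) ⊨ □φ`. -/
def AlwaysP (φ : Run n Msg Act FD → ℕ → Prop) (r : Run n Msg Act FD) (m : ℕ) : Prop :=
  ∀ m' ≥ m, φ r m'

/-- `(R,r,m) ⊨ ◇φ`. -/
def EventuallyP (φ : Run n Msg Act FD → ℕ → Prop) (r : Run n Msg Act FD) (m : ℕ) : Prop :=
  ∃ m' ≥ m, φ r m'

/-- `φ` is stable in `R`: once true, it remains true. -/
def StableIn (R : Set (Run n Msg Act FD)) (φ : Run n Msg Act FD → ℕ → Prop) : Prop :=
  ∀ r ∈ R, ∀ m, φ r m → ∀ m' ≥ m, φ r m'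

/-- `φ` is local to `p` in `R`: at every point, `p` knows whether `φ` holds. -/
def LocalTo (R : Set (Run n Msg Act FD)) (p : Fin n)
    (φ : Run n Msg Act FD → ℕ → Prop) : Prop :=
  ∀ r ∈ R, ∀ m, Knows R p φ r m ∨ Knows R p (fun r' m' => ¬ φ r' m') r m

/-- `φ` is insensitive to failure by `q` in `R`. -/
def Insensitive (R : Set (Run n Msg Act FD)) (q : Fin n)
    (φ : Run n Msg Act FD → ℕ → Prop) : Prop :=
  ∀ r ∈ R, ∀ r' ∈ R, ∀ m m', r' m' q = r m q ++ [Event.crash] →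
    (φ r m ↔ φ r' m')

/-- Run `r'` extends the point `(r,m)`. -/
def Extends (r' r : Run n Msg Act FD) (m : ℕ) : Prop :=
  ∀ m' ≤ m, ∀ p, r' m' p = r m' p

/-! ## Conditions A1–A5 -/

/-- A1: failures are independent of other events. -/
def CondA1 (R : Set (Run n Msg Act FD)) : Prop :=
  ∀ S : Finset (Fin n),
    (∃ rS ∈ R, ∀ q ∈ S, Faulty rS q) →
    ∀ r ∈ R, ∀ m, (∀ q, q ∉ S → Event.crash ∉ r m q) →
      ∃ r' ∈ R, Extends r' r m ∧ faultySet r' = S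

/-- A2. -/
def CondA2 (R : Set (Run n Msg Act FD)) : Prop :=
  ∀ r₁ ∈ R, ∀ r₂ ∈ R, ∀ m : ℕ, faultySet r₁ = faultySet r₂ →
    (∀ q, q ∉ faultySet r₁ → r₁ m q = r₂ m q) →
    ∃ r₁' ∈ R, ∃ r₂' ∈ R, Extends r₁' r₁ m ∧ Extends r₂' r₂ m ∧
      (∀ q ∈ faultySet r₁, Event.crash ∈ r₁' (m+1) q ∧ Event.crash ∈ r₂' (m+1) q) ∧
      (∀ m' ≥ m, ∀ q, q ∉ faultySet r₁ → r₁' m' q = r₂' m' q)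

/-- A3: `K_q init_p(α)` is insensitive to failure by `q`. -/
def CondA3 (ow : Act → Fin n) (R : Set (Run n Msg Act FD)) : Prop :=
  ∀ (p q : Fin n) (α : Act), ow α = p →
    Insensitive R q
      (fun r m => Knows R q (fun r' m' => Event.initAct α ∈ r' m' p) r m)

/-- A4. -/
def CondA4 (R : Set (Run n Msg Act FD)) : Prop :=
  ∀ (φ : Run n Msg Act FD → ℕ → Prop) (p : Fin n),
    StableIn R φ → LocalTo R p φ → Insensitive R p φ →
    ∀ r ∈ R, ∀ m : ℕ, ∀ S : Finset (Fin n), S.Nonempty →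
      (∀ q ∈ S, ¬ Knows R q φ r m) →
      ∃ r' ∈ R,
        (∀ q ∈ S, r' m q = r m q) ∧
        (∀ q, q ∉ S → ∃ h, h <+: r m q ∧
          (r' m q = h ∨ (r' m q = h ++ [Event.crash] ∧ Event.crash ∈ r m q))) ∧
        ¬ φ r' m

/-- A5ₜ: every set of at most `t` processes is exactly the faulty set of some run. -/
def CondA5 (R : Set (Run n Msg Act FD)) (t : ℕ) : Prop :=
  ∀ S : Finset (Fin n), S.card ≤ t → ∃ rS ∈ R, faultySet rS = S

/-! ## The simulations R^f and R^{f'} -/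

open Classical in
/-- The set of processes that `p` knows (in `R` at `(r,m)`) to have crashed. -/
noncomputable def KCrashSet (R : Set (Run n Msg Act FD)) (r : Run n Msg Act FD)
    (m : ℕ) (p : Fin n) : Finset (Fin n) :=
  Finset.univ.filter (fun q => Knows R p (fun r' m' => Event.crash ∈ r' m' q) r m)

/-- `p`'s history in `f(r)` (conditions P1–P3): at odd times the new failure
detector reports the processes `p` knows to have crashed; at even times the
next non-failure-detector event of `r` (if any) is appended. -/
noncomputable def fHist (R : Set (Run n Msg Act FD)) (r : Run n Msg Act FD)
    (p : Fin n) : ℕ → History n Msg Act (Finset (Fin n))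
  | 0 => []
  | (m+1) =>
    if m % 2 = 0 then
      fHist R r p m ++ [Event.suspect (KCrashSet R r (m/2) p)]
    else
      fHist R r p m ++ ((r (m/2 + 1) p).drop ((r (m/2) p).length)).filterMap mapNonFD

/-- The run `f(r)`. -/
noncomputable def fRun (R : Set (Run n Msg Act FD)) (r : Run n Msg Act FD) :
    StdRun n Msg Act :=
  fun m p => fHist R r p m

/-- The system `R^f = {f(r) : r ∈ R}`. -/
noncomputable def RfSystem (R : Set (Run n Msg Act FD)) : Set (StdRun n Msg Act) :=
  fRun R '' R

open Classical in
/-- The largest `k'` such that at every point with the same local history for `p`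
as `(r,m)`, at least `k'` processes of `S` have crashed. -/
noncomputable def kMax (R : Set (Run n Msg Act FD)) (r : Run n Msg Act FD)
    (m : ℕ) (p : Fin n) (S : Finset (Fin n)) : ℕ :=
  sSup {k' : ℕ | ∀ r'' ∈ R, ∀ m'', r'' m'' p = r m p →
    k' ≤ (S.filter (fun q => Event.crash ∈ r'' m'' q)).card}

/-- `p`'s history in `f'(r)` (conditions P1, P2, P3'), relative to an enumeration
`enum` of the subsets of `Proc`. -/
noncomputable def f'Hist (R : Set (Run n Msg Act FD)) (enum : ℕ → Finset (Fin n))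
    (r : Run n Msg Act FD) (p : Fin n) : ℕ → History n Msg Act (Finset (Fin n) × ℕ)
  | 0 => []
  | (m+1) =>
    if m % 2 = 0 then
      f'Hist R enum r p m ++
        [Event.suspect (enum ((r (m/2 + 1) p).length % 2 ^ n),
          kMax R r (m/2) p (enum ((r (m/2 + 1) p).length % 2 ^ n)))]
    else
      f'Hist R enum r p m ++ ((r (m/2 + 1) p).drop ((r (m/2) p).length)).filterMap mapNonFD

/-- The run `f'(r)`. -/
noncomputable def f'Run (R : Set (Run n Msg Act FD)) (enum : ℕ → Finset (Fin n))
    (r : Run n Msg Act FD) : GenRun n Msg Act :=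
  fun m p => f'Hist R enum r p m

/-- The system `R^{f'} = {f'(r) : r ∈ R}`. -/
noncomputable def Rf'System (R : Set (Run n Msg Act FD)) (enum : ℕ → Finset (Fin n)) :
    Set (GenRun n Msg Act) :=
  f'Run R enum '' R

/-- Infinitely many `init` events appear in `r`. -/
def InfInits (r : Run n Msg Act FD) : Prop :=
  ∀ N, ∃ m, N ≤ ∑ p, (r m p).countP (fun e => match e with | Event.initAct _ => true | _ => false)

end Model

/-!
Since `min t (n - 1) = n - 1` for `t ≥ n - 1`, a `t`-useful report `(S, k)` then has `k = |S|`. By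
accuracy a report `(S, |S|)` means that all of `S` has crashed, and by usefulness some such report
covers all faulty processes; the union of the sets `S` over all reports `(S, |S|)` seen so far is
therefore a perfect detector. Conversely, a correct process with a perfect detector eventually
suspects all faulty processes at once, and replacing each report `S` by `(S, |S|)` makes it useful.
In a run without failures a process may never report anything, so the report `(∅, 0)` is put in
front of every history.
-/

section NonFDEvents

variable {n : ℕ} {Msg Act FD FD' FD'' : Type}

/-- The subsequence of events of a history other than failure-detector events, as it is compared in
`IsConversion`. -/
def nonFDEvents (l : History n Msg Act FD) : History n Msg Act Unit :=
  l.filterMap mapNonFD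

theorem nonFDEvents_append (l₁ l₂ : History n Msg Act FD) :
    nonFDEvents (l₁ ++ l₂) = nonFDEvents l₁ ++ nonFDEvents l₂ :=
  List.filterMap_append

theorem mapNonFD_inj {a b : Event n Msg Act FD} {x : Event n Msg Act FD'}
    (ha : mapNonFD a = some x) (hb : mapNonFD b = some x) : a = b := by
  cases a <;> cases ha <;> cases b <;> cases hb <;> rfl

theorem mem_nonFDEvents {e : Event n Msg Act FD} {x : Event n Msg Act Unit}
    (he : mapNonFD e = some x) (l : History n Msg Act FD) : x ∈ nonFDEvents l ↔ e ∈ l := by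
  rw [nonFDEvents, List.mem_filterMap]
  exact ⟨fun ⟨_, ha, hax⟩ => mapNonFD_inj hax he ▸ ha, fun h => ⟨e, h, he⟩⟩

theorem count_nonFDEvents [DecidableEq Msg] [DecidableEq Act] [DecidableEq FD]
    {e : Event n Msg Act FD} {x : Event n Msg Act Unit}
    (he : mapNonFD e = some x) (l : History n Msg Act FD) :
    (nonFDEvents l).count x = l.count e := by
  rw [nonFDEvents, List.count_filterMap, List.count]
  refine List.countP_congr fun a _ => ?_
  simp only [beq_iff_eq]
  exact ⟨fun hax => mapNonFD_inj hax he, fun hae => hae ▸ he⟩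

theorem mem_faultySet {r : Run n Msg Act FD} {p : Fin n} : p ∈ faultySet r ↔ Faulty r p := by
  simp only [faultySet, Finset.mem_filter, Finset.mem_univ, true_and]

/-- `r'` replays `r` along the clock `τ`: by time `m` of `r'`, every process has performed the same
non-failure-detector events as by time `τ m` of `r`. Surjectivity of `τ` says that no point of `r`
is left out. -/
structure Replays (τ : ℕ → ℕ) (r' : Run n Msg Act FD') (r : Run n Msg Act FD) : Prop where
  surjective : τ.Surjective
  nonFDEvents_eq : ∀ m p, nonFDEvents (r' m p) = nonFDEvents (r (τ m) p)

namespace Replays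

variable {τ τ' : ℕ → ℕ} {r : Run n Msg Act FD} {r' : Run n Msg Act FD'} {r'' : Run n Msg Act FD''}

theorem trans (h' : Replays τ' r'' r') (h : Replays τ r' r) : Replays (τ ∘ τ') r'' r where
  surjective := h.surjective.comp h'.surjective
  nonFDEvents_eq m p := (h'.nonFDEvents_eq m p).trans (h.nonFDEvents_eq (τ' m) p)

theorem mem_iff (h : Replays τ r' r) {e : Event n Msg Act FD} {e' : Event n Msg Act FD'}
    {x : Event n Msg Act Unit} (he : mapNonFD e = some x) (he' : mapNonFD e' = some x)
    (m : ℕ) (p : Fin n) : e' ∈ r' m p ↔ e ∈ r (τ m) p := by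
  rw [← mem_nonFDEvents he', h.nonFDEvents_eq, mem_nonFDEvents he]

theorem count_eq [DecidableEq Msg] [DecidableEq Act] [DecidableEq FD] [DecidableEq FD']
    (h : Replays τ r' r) {e : Event n Msg Act FD} {e' : Event n Msg Act FD'}
    {x : Event n Msg Act Unit} (he : mapNonFD e = some x) (he' : mapNonFD e' = some x)
    (m : ℕ) (p : Fin n) : (r' m p).count e' = (r (τ m) p).count e := by
  rw [← count_nonFDEvents he', h.nonFDEvents_eq, count_nonFDEvents he]

theorem crash_mem_iff (h : Replays τ r' r) (m : ℕ) (p : Fin n) :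
    Event.crash ∈ r' m p ↔ Event.crash ∈ r (τ m) p :=
  h.mem_iff rfl rfl m p

theorem faulty_iff (h : Replays τ r' r) (p : Fin n) : Faulty r' p ↔ Faulty r p := by
  simp only [Faulty, h.crash_mem_iff, h.surjective.exists (p := fun m => Event.crash ∈ r m p)]

theorem faultySet_eq (h : Replays τ r' r) : faultySet r' = faultySet r := by
  ext p
  rw [mem_faultySet, mem_faultySet, h.faulty_iff]

/-- R3 and R5 speak about non-failure-detector events only, hence carry over from `r`. -/
theorem isRun [DecidableEq Msg] [DecidableEq Act] [DecidableEq FD] [DecidableEq FD']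
    (h : Replays τ r' r) (hr : IsRun r) (init : ∀ p, r' 0 p = [])
    (step : ∀ p m, r' (m + 1) p = r' m p ∨ ∃ e, r' (m + 1) p = r' m p ++ [e])
    (crash_last : ∀ p m, Event.crash ∈ r' m p → ∃ l, r' m p = l ++ [Event.crash]) :
    IsRun r' := by
  obtain ⟨-, -, recv_sent, -, fair⟩ := hr
  refine ⟨init, step, fun p q msg m => ?_, crash_last, fun p q msg => ?_⟩
  · rw [h.mem_iff (e := .recv p msg) rfl rfl, h.mem_iff (e := .send q msg) rfl rfl]
    exact recv_sent p q msg (τ m)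
  · have count_send := h.count_eq (e := .send q msg) (e' := .send q msg) rfl rfl
    have count_recv := h.count_eq (e := .recv p msg) (e' := .recv p msg) rfl rfl
    intro sent_unbounded
    refine (fair p q msg fun N => ?_).imp (h.faulty_iff q).2 fun received_unbounded N => ?_
    · obtain ⟨m, hm⟩ := sent_unbounded N
      exact ⟨τ m, count_send m p ▸ hm⟩
    · obtain ⟨m, hm⟩ := received_unbounded N
      obtain ⟨m, rfl⟩ := h.surjective m
      exact ⟨m, count_recv m q ▸ hm⟩

end Replays

theorem isConversion_of_replays [DecidableEq Msg] [DecidableEq Act] [DecidableEq FD']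
    {τ : ℕ → ℕ} {f : Run n Msg Act FD → Run n Msg Act FD'} {R : Set (Run n Msg Act FD)}
    (hrun : ∀ r ∈ R, IsRun (f r)) (hreplay : ∀ r ∈ R, Replays τ (f r) r) :
    IsConversion f R (f '' R) := by
  refine ⟨rfl, fun r hr => ⟨hrun r hr, fun p m => ?_⟩⟩
  obtain ⟨m', rfl⟩ := (hreplay r hr).surjective m
  refine ⟨m', ?_⟩
  change (nonFDEvents _).Sublist (nonFDEvents _)
  rw [(hreplay r hr).nonFDEvents_eq]

end NonFDEvents

section Relabelling

variable {n : ℕ} {Msg Act FD FD' : Type}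

/-- A history transformation that processes the events one by one and alters nothing but the
reports of failure-detector events. The new report may depend on the earlier history. -/
structure IsRelabelling (g : History n Msg Act FD → History n Msg Act FD') : Prop where
  nil : g [] = []
  snoc : ∀ l e, ∃ e', mapNonFD (FD' := Unit) e' = mapNonFD e ∧ g (l ++ [e]) = g l ++ [e']

namespace IsRelabelling

variable {g : History n Msg Act FD → History n Msg Act FD'}

theorem snoc_crash (hg : IsRelabelling g) (l : History n Msg Act FD) :
    g (l ++ [Event.crash]) = g l ++ [Event.crash] := by
  obtain ⟨e', he', heq⟩ := hg.snoc l Event.crash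
  rwa [mapNonFD_inj (b := Event.crash) he' rfl] at heq

theorem nonFDEvents_eq (hg : IsRelabelling g) (l : History n Msg Act FD) :
    nonFDEvents (g l) = nonFDEvents l := by
  induction l using List.reverseRecOn with
  | nil => rw [hg.nil]; rfl
  | append_singleton l e ih =>
    obtain ⟨e', he', heq⟩ := hg.snoc l e
    have same_event : nonFDEvents [e'] = nonFDEvents [e] := by
      simp only [nonFDEvents, List.filterMap_cons, List.filterMap_nil, he']
    rw [heq, nonFDEvents_append, nonFDEvents_append, ih, same_event]

theorem replays (hg : IsRelabelling g) (r : Run n Msg Act FD) :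
    Replays id (fun m p => g (r m p)) r where
  surjective := Function.surjective_id
  nonFDEvents_eq m p := hg.nonFDEvents_eq (r m p)

theorem isRun [DecidableEq Msg] [DecidableEq Act] [DecidableEq FD] [DecidableEq FD']
    (hg : IsRelabelling g) {r : Run n Msg Act FD} (hr : IsRun r) :
    IsRun (fun m p => g (r m p)) := by
  have ⟨init, step, _, crash_last, _⟩ := hr
  refine (hg.replays r).isRun hr (fun p => ?_) (fun p m => ?_) (fun p m hm => ?_)
  · rw [init, hg.nil]
  · obtain heq | ⟨e, heq⟩ := step p m
    · exact .inl (congrArg g heq)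
    · obtain ⟨e', -, heq'⟩ := hg.snoc (r m p) e
      exact .inr ⟨e', by rw [heq, heq']⟩
  · obtain ⟨l, hl⟩ := crash_last p m (((hg.replays r).crash_mem_iff m p).1 hm)
    exact ⟨g l, by rw [hl, hg.snoc_crash]⟩

end IsRelabelling

/-- The event with its failure-detector report, if it has one, translated by `c`. -/
def Event.mapReport (c : FD → FD') : Event n Msg Act FD → Event n Msg Act FD'
  | .send q msg => .send q msg
  | .recv q msg => .recv q msg
  | .crash => .crash
  | .doAct a => .doAct a
  | .initAct a => .initAct a
  | .suspect x => .suspect (c x)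

theorem Event.mapReport_eq_suspect {c : FD → FD'} {e : Event n Msg Act FD} {y : FD'} :
    e.mapReport c = suspect y ↔ ∃ x, e = suspect x ∧ c x = y := by
  cases e <;> simp [mapReport]

theorem Event.mapNonFD_mapReport (c : FD → FD') (e : Event n Msg Act FD) :
    mapNonFD (FD' := Unit) (e.mapReport c) = mapNonFD e := by
  cases e <;> rfl

theorem suspect_mem_map_mapReport {c : FD → FD'} {l : History n Msg Act FD} {y : FD'} :
    Event.suspect y ∈ l.map (Event.mapReport c) ↔ ∃ x, Event.suspect x ∈ l ∧ c x = y := by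
  simp only [List.mem_map, Event.mapReport_eq_suspect]
  grind

theorem isRelabelling_map_mapReport (c : FD → FD') :
    IsRelabelling (List.map (Event.mapReport (n := n) (Msg := Msg) (Act := Act) c)) where
  nil := rfl
  snoc _ e := ⟨e.mapReport c, e.mapNonFD_mapReport c, List.map_append⟩

theorem isRelabelling_unionHist (acc : Finset (Fin n)) :
    IsRelabelling (unionHist (Msg := Msg) (Act := Act) acc) where
  nil := rfl
  snoc l e := by
    induction l generalizing acc with
    | nil => cases e <;> simp [unionHist, mapNonFD]
    | cons a l ih => cases a <;> simpa [unionHist] using ih _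

/-- The run in which every process first reports `x` and from then on is one time step late. -/
def prependReport (x : FD) (r : Run n Msg Act FD) : Run n Msg Act FD
  | 0, _ => []
  | m + 1, p => Event.suspect x :: r m p

theorem suspect_mem_prependReport_succ {x y : FD} {r : Run n Msg Act FD} {m : ℕ} {p : Fin n} :
    Event.suspect y ∈ prependReport x r (m + 1) p ↔ y = x ∨ Event.suspect y ∈ r m p := by
  simp only [prependReport, List.mem_cons, Event.suspect.injEq]

theorem replays_prependReport (x : FD) {r : Run n Msg Act FD} (init : ∀ p, r 0 p = []) :
    Replays Nat.pred (prependReport x r) r where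
  surjective m := ⟨m + 1, m.pred_succ⟩
  nonFDEvents_eq
    | 0, p => by rw [Nat.pred_zero, init]; rfl
    | _ + 1, _ => rfl

theorem isRun_prependReport [DecidableEq Msg] [DecidableEq Act] [DecidableEq FD]
    (x : FD) {r : Run n Msg Act FD} (hr : IsRun r) : IsRun (prependReport x r) := by
  have ⟨init, step, _, crash_last, _⟩ := hr
  refine (replays_prependReport x init).isRun hr (fun _ => rfl) ?_ ?_
  · rintro p (_ | m)
    · exact .inr ⟨.suspect x, by simp only [prependReport, init, List.nil_append]⟩
    · exact (step p m).imp (congrArg _) fun ⟨e, he⟩ => ⟨e, congrArg _ he⟩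
  · rintro p (_ | m) hm
    · cases hm
    · obtain ⟨l, hl⟩ := crash_last p m ((List.mem_cons.1 hm).resolve_left nofun)
      exact ⟨.suspect x :: l, congrArg _ hl⟩

end Relabelling

section Reports

variable {n : ℕ} {Msg Act FD : Type}

/-- The report of the last failure-detector event of a history, and `x` if there is none; thus
`Suspects r p m` is `lastReport ∅ (r m p)`. -/
def lastReport (x : FD) (l : History n Msg Act FD) : FD :=
  l.foldl (fun y e => match e with | .suspect z => z | _ => y) x

theorem suspects_eq_lastReport (r : StdRun n Msg Act) (p : Fin n) (m : ℕ) :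
    Suspects r p m = lastReport ∅ (r m p) := by
  unfold Suspects lastReport
  congr 1
  funext S e
  cases e <;> rfl

theorem lastReport_snoc_suspect (x y : FD) (l : History n Msg Act FD) :
    lastReport x (l ++ [.suspect y]) = y := by
  simp only [lastReport, List.foldl_append, List.foldl_cons, List.foldl_nil]

theorem lastReport_eq_or_mem (x : FD) (l : History n Msg Act FD) :
    lastReport x l = x ∨ Event.suspect (lastReport x l) ∈ l := by
  induction l using List.reverseRecOn with
  | nil => exact .inl rfl
  | append_singleton l e ih =>
    cases e <;> simp_all [lastReport]

theorem mem_lastReport_unionHist {q : Fin n} {l : History n Msg Act (Finset (Fin n))}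
    {acc : Finset (Fin n)} :
    q ∈ lastReport acc (unionHist acc l) ↔ q ∈ acc ∨ ∃ S, Event.suspect S ∈ l ∧ q ∈ S := by
  induction l generalizing acc with
  | nil => simp [unionHist, lastReport]
  | cons a l ih =>
    unfold lastReport at ih ⊢
    cases a <;> simp [unionHist, ih, or_assoc, or_and_right, exists_or]

theorem mem_suspects_unionConvert {r : StdRun n Msg Act} {p q : Fin n} {m : ℕ} :
    q ∈ Suspects (unionConvert r) p m ↔ ∃ S, Event.suspect S ∈ r m p ∧ q ∈ S := by
  simp only [suspects_eq_lastReport, unionConvert, mem_lastReport_unionHist, Finset.notMem_empty,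
    false_or]

theorem IsRun.monotone_mem [DecidableEq Msg] [DecidableEq Act] [DecidableEq FD]
    {r : Run n Msg Act FD} (hr : IsRun r) {p : Fin n} {e : Event n Msg Act FD} :
    Monotone fun m => e ∈ r m p := by
  obtain ⟨-, step, -⟩ := hr
  refine monotone_nat_of_le_succ fun m hm => ?_
  obtain heq | ⟨e', heq⟩ := step p m
  · exact heq ▸ hm
  · exact heq ▸ List.mem_append_left _ hm

theorem IsRun.exists_suspects_eq [DecidableEq Msg] [DecidableEq Act] {r : StdRun n Msg Act}
    (hr : IsRun r) {p : Fin n} {m : ℕ} {S : Finset (Fin n)} (h : Event.suspect S ∈ r m p) :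
    ∃ m' ≤ m, Suspects r p m' = S := by
  have ⟨init, step, _⟩ := hr
  induction m with
  | zero => simp [init] at h
  | succ m ih =>
    by_cases hm : Event.suspect S ∈ r m p
    · obtain ⟨m', hle, heq⟩ := ih hm
      exact ⟨m', Nat.le_succ_of_le hle, heq⟩
    · obtain heq | ⟨e, heq⟩ := step p m
      · exact absurd (heq ▸ h) hm
      · obtain rfl : Event.suspect S = e := by simpa [heq, hm] using h
        exact ⟨m + 1, le_rfl, by rw [suspects_eq_lastReport, heq, lastReport_snoc_suspect]⟩

theorem StrongAccuracyRun.crash_mem_of_suspect_mem [DecidableEq Msg] [DecidableEq Act]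
    {r : StdRun n Msg Act} (ha : StrongAccuracyRun r) (hr : IsRun r) {p q : Fin n} {m : ℕ}
    {S : Finset (Fin n)} (h : Event.suspect S ∈ r m p) (hq : q ∈ S) : Event.crash ∈ r m q := by
  obtain ⟨m', hle, rfl⟩ := hr.exists_suspects_eq h
  exact hr.monotone_mem hle (ha p q m' hq)

theorem StrongCompletenessRun.exists_faultySet_subset_suspects {r : StdRun n Msg Act}
    (hc : StrongCompletenessRun r) {p : Fin n} (hp : ¬ Faulty r p) :
    ∃ m, faultySet r ⊆ Suspects r p m := by
  have eventually_suspected : ∀ᶠ m in Filter.atTop, ∀ q ∈ faultySet r, q ∈ Suspects r p m := by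
    refine (Filter.eventually_all_finset _).2 fun q hq => Filter.eventually_atTop.2 ?_
    exact hc p q (mem_faultySet.1 hq) hp
  exact eventually_suspected.exists

end Reports

section Conversion

variable {n : ℕ} {Msg Act : Type} {t : ℕ}

theorem TUsefulEvent.card_eq {r : GenRun n Msg Act} {S : Finset (Fin n)} {k : ℕ}
    (h : TUsefulEvent t r S k) (ht : n - 1 ≤ t) : S.card = k := by
  obtain ⟨-, hcard, hk⟩ := h
  omega

theorem tUsefulEvent_card (hn : 0 < n) {r : GenRun n Msg Act} {S : Finset (Fin n)}
    (hS : faultySet r ⊆ S) : TUsefulEvent t r S S.card :=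
  ⟨hS, by omega, le_rfl⟩

/-- The set `S` of a report `(S, |S|)`, which under accuracy consists of crashed processes; other
reports leave open who has crashed and are replaced by `∅`. -/
def exactReport (x : Finset (Fin n) × ℕ) : Finset (Fin n) :=
  if x.1.card = x.2 then x.1 else ∅

theorem mem_exactReport {q : Fin n} {x : Finset (Fin n) × ℕ} :
    q ∈ exactReport x ↔ x.1.card = x.2 ∧ q ∈ x.1 := by
  simp [exactReport, apply_ite (q ∈ ·)]

/-- The conversion of a useful generalized detector to a perfect one: report all processes that
some exact report `(S, |S|)` so far has shown to be crashed. -/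
def perfectConvert (r : GenRun n Msg Act) : StdRun n Msg Act :=
  unionConvert fun m p => (r m p).map (Event.mapReport exactReport)

/-- The conversion of a perfect detector to a useful generalized one. The initial report `(∅, 0)`
takes the place of the value `∅` of `Suspects` before the first report. -/
def usefulConvert (r : StdRun n Msg Act) : GenRun n Msg Act :=
  prependReport (∅, 0) fun m p => (r m p).map (Event.mapReport fun S => (S, S.card))

theorem replays_perfectConvert (r : GenRun n Msg Act) : Replays id (perfectConvert r) r :=
  ((isRelabelling_unionHist ∅).replays _).trans ((isRelabelling_map_mapReport _).replays r)

theorem replays_usefulConvert {r : StdRun n Msg Act} (init : ∀ p, r 0 p = []) :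
    Replays Nat.pred (usefulConvert r) r :=
  (replays_prependReport _ fun p => by rw [init]; rfl).trans
    ((isRelabelling_map_mapReport _).replays r)

theorem mem_suspects_perfectConvert {r : GenRun n Msg Act} {p q : Fin n} {m : ℕ} :
    q ∈ Suspects (perfectConvert r) p m ↔
      ∃ S : Finset (Fin n), Event.suspect (S, S.card) ∈ r m p ∧ q ∈ S := by
  simp only [perfectConvert, mem_suspects_unionConvert, suspect_mem_map_mapReport]
  constructor
  · rintro ⟨_, ⟨⟨S, k⟩, hmem, rfl⟩, hq⟩
    obtain ⟨hcard, hqS⟩ : S.card = k ∧ q ∈ S := mem_exactReport.1 hq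
    exact ⟨S, hcard ▸ hmem, hqS⟩
  · rintro ⟨S, hmem, hq⟩
    exact ⟨_, ⟨_, hmem, rfl⟩, mem_exactReport.2 ⟨rfl, hq⟩⟩

theorem suspect_mem_usefulConvert_succ {r : StdRun n Msg Act} {p : Fin n} {m : ℕ}
    {x : Finset (Fin n) × ℕ} :
    Event.suspect x ∈ usefulConvert r (m + 1) p ↔
      x = (∅, 0) ∨ ∃ S, Event.suspect S ∈ r m p ∧ (S, S.card) = x := by
  rw [usefulConvert, suspect_mem_prependReport_succ, suspect_mem_map_mapReport]

theorem suspect_suspects_mem_usefulConvert (r : StdRun n Msg Act) (p : Fin n) (m : ℕ) :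
    Event.suspect (Suspects r p m, (Suspects r p m).card) ∈ usefulConvert r (m + 1) p := by
  rw [suspect_mem_usefulConvert_succ]
  obtain h | h := lastReport_eq_or_mem ∅ (r m p) <;> rw [← suspects_eq_lastReport] at h
  · rw [h]
    exact .inl rfl
  · exact .inr ⟨_, h, rfl⟩

theorem strongAccuracyRun_perfectConvert {r : GenRun n Msg Act} (ha : GenAccuracyRun r) :
    StrongAccuracyRun (perfectConvert r) := by
  intro p q m hq
  obtain ⟨S, hmem, hqS⟩ := mem_suspects_perfectConvert.1 hq
  obtain ⟨S', hsub, hcard, hcrash⟩ := ha p m S _ hmem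
  obtain rfl : S' = S := Finset.eq_of_subset_of_card_le hsub hcard.ge
  exact ((replays_perfectConvert r).crash_mem_iff m q).2 (hcrash q hqS)

variable [DecidableEq Msg] [DecidableEq Act]

theorem strongCompletenessRun_perfectConvert {r : GenRun n Msg Act} (hr : IsRun r)
    (ht : n - 1 ≤ t) (hc : GenCompletenessRun t r) : StrongCompletenessRun (perfectConvert r) := by
  intro p q hq hp
  rw [(replays_perfectConvert r).faulty_iff] at hq hp
  obtain ⟨m, S, k, hmem, huseful⟩ := hc p hp
  obtain rfl := huseful.card_eq ht
  have hqS : q ∈ S := huseful.1 (mem_faultySet.2 hq)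
  exact ⟨m, fun m' hm' => mem_suspects_perfectConvert.2 ⟨S, hr.monotone_mem hm' hmem, hqS⟩⟩

theorem isConversion_perfectConvert {R : Set (GenRun n Msg Act)} (hR : ∀ r ∈ R, IsRun r) :
    IsConversion perfectConvert R (perfectConvert '' R) :=
  isConversion_of_replays
    (fun r hr => (isRelabelling_unionHist ∅).isRun
      ((isRelabelling_map_mapReport exactReport).isRun (hR r hr)))
    (fun r _ => replays_perfectConvert r)

theorem genAccuracyRun_usefulConvert {r : StdRun n Msg Act} (hr : IsRun r)
    (ha : StrongAccuracyRun r) : GenAccuracyRun (usefulConvert r) := by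
  rintro p (_ | m) S k hmem
  · cases hmem
  · obtain h | ⟨T, hT, h⟩ := suspect_mem_usefulConvert_succ.1 hmem
    · obtain ⟨rfl, rfl⟩ := Prod.mk.inj h
      exact ⟨∅, subset_rfl, rfl, nofun⟩
    · obtain ⟨rfl, rfl⟩ := Prod.mk.inj h
      exact ⟨T, subset_rfl, rfl, fun q hq => ((replays_usefulConvert hr.1).crash_mem_iff _ q).2
        (ha.crash_mem_of_suspect_mem hr hT hq)⟩

theorem genCompletenessRun_usefulConvert {r : StdRun n Msg Act} (hr : IsRun r)
    (hc : StrongCompletenessRun r) : GenCompletenessRun t (usefulConvert r) := by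
  intro p hp
  have hreplay := replays_usefulConvert hr.1
  obtain ⟨m, hm⟩ := hc.exists_faultySet_subset_suspects (mt (hreplay.faulty_iff p).2 hp)
  exact ⟨m + 1, _, _, suspect_suspects_mem_usefulConvert r p m,
    tUsefulEvent_card p.pos (hreplay.faultySet_eq.trans_subset hm)⟩

theorem isConversion_usefulConvert {R : Set (StdRun n Msg Act)} (hR : ∀ r ∈ R, IsRun r) :
    IsConversion usefulConvert R (usefulConvert '' R) :=
  isConversion_of_replays
    (fun r hr => isRun_prependReport _ ((isRelabelling_map_mapReport _).isRun (hR r hr)))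
    (fun r hr => replays_usefulConvert (hR r hr).1)

end Conversion

/-- A system with an `n`-useful or `(n-1)`-useful generalized
failure detector can be converted to one with a perfect standard failure
detector; conversely a system with a perfect standard failure detector can be
converted to one with an `n`-useful (hence `(n-1)`-useful) generalized failure
detector; and any `(n-1)`-useful or `n`-useful failure-detector event
`suspect_p(S,k)` has `|S| = k`. -/
theorem useful_FDs_equiv_perfect_FDs
    (n : ℕ) (Msg Act : Type) [DecidableEq Msg] [DecidableEq Act] :
    (∀ R : Set (GenRun n Msg Act), (∀ r ∈ R, IsRun r) →
      ((∀ r ∈ R, GenAccuracyRun r ∧ GenCompletenessRun n r) ∨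
       (∀ r ∈ R, GenAccuracyRun r ∧ GenCompletenessRun (n - 1) r)) →
      ∃ (f : GenRun n Msg Act → StdRun n Msg Act) (R' : Set (StdRun n Msg Act)),
        IsConversion f R R' ∧
        (∀ r' ∈ R', StrongCompletenessRun r' ∧ StrongAccuracyRun r')) ∧
    (∀ R : Set (StdRun n Msg Act), (∀ r ∈ R, IsRun r) →
      (∀ r ∈ R, StrongCompletenessRun r ∧ StrongAccuracyRun r) →
      ∃ (f : StdRun n Msg Act → GenRun n Msg Act) (R' : Set (GenRun n Msg Act)),
        IsConversion f R R' ∧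
        (∀ r' ∈ R', GenAccuracyRun r' ∧ GenCompletenessRun n r' ∧
          GenCompletenessRun (n - 1) r')) ∧
    (∀ (r : GenRun n Msg Act) (S : Finset (Fin n)) (k : ℕ),
      TUsefulEvent n r S k ∨ TUsefulEvent (n - 1) r S k → S.card = k) := by
  refine ⟨fun R hR hU => ?_, fun R hR hP => ?_, fun r S k hU => ?_⟩
  · obtain ⟨t, ht, hU⟩ : ∃ t ≥ n - 1, ∀ r ∈ R, GenAccuracyRun r ∧ GenCompletenessRun t r :=
      hU.elim (⟨n, Nat.sub_le n 1, ·⟩) (⟨n - 1, le_rfl, ·⟩)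
    refine ⟨perfectConvert, _, isConversion_perfectConvert hR, ?_⟩
    rintro _ ⟨r, hr, rfl⟩
    obtain ⟨haccurate, hcomplete⟩ := hU r hr
    exact ⟨strongCompletenessRun_perfectConvert (hR r hr) ht hcomplete,
      strongAccuracyRun_perfectConvert haccurate⟩
  · refine ⟨usefulConvert, _, isConversion_usefulConvert hR, ?_⟩
    rintro _ ⟨r, hr, rfl⟩
    obtain ⟨hcomplete, haccurate⟩ := hP r hr
    exact ⟨genAccuracyRun_usefulConvert (hR r hr) haccurate,
      genCompletenessRun_usefulConvert (hR r hr) hcomplete,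
      genCompletenessRun_usefulConvert (hR r hr) hcomplete⟩
  · exact hU.elim (·.card_eq (Nat.sub_le n 1)) (·.card_eq le_rfl)
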